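/- The signed Wasserstein distance 𝕎₁ defines a metric on the set of finite signed measures on a Polish space with total mass 1 and finite first moment: it is nonnegative, symmetric, vanishes exactly when the measures are equal, and satisfies the triangle inequality. -/

import Mathlib

/-!
The existence of finite-cost couplings, nonnegativity, symmetry and definiteness are elementary. The
triangle inequality is reduced to a *cancellation lemma* (`exists_coupling_of_add`): a coupling of
`α + γ` and `β + γ` can be turned into a coupling of `α` and `β` of no larger cost. Indeed, if
`π₁` couples `μ⁺ + ν⁻` with `μ⁻ + ν⁺` and `π₂` couples `ν⁺ + θ⁻` with `ν⁻ + θ⁺`, then `π₁ + π₂`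
couples `(μ⁺ + θ⁻) + |ν|` with `(μ⁻ + θ⁺) + |ν|`, and `|ν|` can be cancelled.

The cancellation lemma is proved by a random walk with killing. Disintegrate `π` along its first
marginal as `(α + γ) ⊗ κ`, and let `g` be the density of `γ` with respect to `β + γ`. Particles
start with distribution `α`, jump according to `κ`, and on arriving at `y` continue with
probability `g y` and stop with probability `1 - g y`. Since `α + γ` solves the equation satisfied
by the total occupation measure of this walk, the occupation measure is at most `α + γ`
(`sum_lintegral_walk_le`). Hence the stopped mass is at most `β`, the surviving mass tends to zero,
and, by the triangle inequality for the distance, the total cost between starting and stopping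
points is at most the cost of `π`. The joint law of starting and stopping points is the desired
coupling.

For definiteness, a coupling of small cost moves little mass further than `ε` by Markov's
inequality, so zero cost gives `α F ≤ β (cthickening ε F)` for closed `F` and every `ε > 0`.
-/

open MeasureTheory

/-- The 1-Wasserstein distance between two finite positive measures of equal total mass,
defined as the infimum of transport costs over couplings. -/
noncomputable def W1 {X : Type*} [MetricSpace X] [MeasurableSpace X]
    (α β : Measure X) : ℝ :=
  sInf {c : ℝ | ∃ π : Measure (X × X),
    π.map Prod.fst = α ∧ π.map Prod.snd = β ∧ c = ∫ p, dist p.1 p.2 ∂π}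

/-- The signed Wasserstein distance `𝕎₁(μ,ν) := W₁(μ⁺+ν⁻, μ⁻+ν⁺)`, computed here via the
Jordan decomposition (which is one admissible decomposition). -/
noncomputable def WW1 {X : Type*} [MetricSpace X] [MeasurableSpace X]
    (μ ν : SignedMeasure X) : ℝ :=
  W1 (μ.toJordanDecomposition.posPart + ν.toJordanDecomposition.negPart)
     (μ.toJordanDecomposition.negPart + ν.toJordanDecomposition.posPart)

open ProbabilityTheory Filter Topology
open scoped ENNReal

/-! ### A random walk with killing -/

section Walk

variable {X : Type*} [MeasurableSpace X]

/-- The transition kernel on pairs (starting point, current point): the starting point is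
remembered and the current point moves according to `κ`. -/
noncomputable def walkKernel (κ : Kernel X X) : Kernel (X × X) (X × X) :=
  (Kernel.deterministic Prod.fst measurable_fst) ×ₖ (κ.comap Prod.snd measurable_snd)

/-- The joint law of starting point and current point of the particles still alive after `n` jumps,
when particles start with law `α`, jump by `κ` and survive an arrival at `y` with
probability `g y`. -/
noncomputable def walk (α : Measure X) (κ : Kernel X X) (g : X → ℝ≥0∞) : ℕ → Measure (X × X)
  | 0 => α.map (fun x => (x, x))
  | n + 1 => ((walk α κ g n).bind (walkKernel κ)).withDensity (fun p => g p.2)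

variable {α : Measure X} {κ : Kernel X X} [IsMarkovKernel κ] {g : X → ℝ≥0∞}

lemma lintegral_bind_walkKernel (P : Measure (X × X)) {F : X × X → ℝ≥0∞} (hF : Measurable F) :
    ∫⁻ q, F q ∂(P.bind (walkKernel κ)) = ∫⁻ p, ∫⁻ y, F (p.1, y) ∂(κ p.2) ∂P := by
  rw [Measure.lintegral_bind (Kernel.aemeasurable _) hF.aemeasurable]
  refine lintegral_congr fun p => ?_
  rw [walkKernel, Kernel.lintegral_deterministic_prod _ _ _ hF, Kernel.comap_apply]

lemma lintegral_walk_succ (hg : Measurable g) (n : ℕ) {F : X × X → ℝ≥0∞} (hF : Measurable F) :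
    ∫⁻ q, F q ∂(walk α κ g (n + 1))
      = ∫⁻ p, ∫⁻ y, g y * F (p.1, y) ∂(κ p.2) ∂(walk α κ g n) := by
  have hg2 : Measurable fun p : X × X => g p.2 := hg.comp measurable_snd
  rw [walk, lintegral_withDensity_eq_lintegral_mul _ hg2 hF,
    lintegral_bind_walkKernel _ (hg2.mul hF)]
  rfl

/-- The occupation measure of the walk is dominated by every supersolution `σ` of the equation
`σ = α + g • (σ κ)`. -/
lemma sum_lintegral_walk_le {σ : Measure X} (hg : Measurable g)
    (hσ : ∀ h : X → ℝ≥0∞, Measurable h →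
      ∫⁻ x, h x ∂α + ∫⁻ x, ∫⁻ y, g y * h y ∂(κ x) ∂σ ≤ ∫⁻ x, h x ∂σ)
    (n : ℕ) {h : X → ℝ≥0∞} (hh : Measurable h) :
    ∑ k ∈ Finset.range n, ∫⁻ p, h p.2 ∂(walk α κ g k) ≤ ∫⁻ x, h x ∂σ := by
  induction n generalizing h with
  | zero => simp
  | succ n ih =>
    rw [Finset.sum_range_succ', add_comm]
    refine le_trans ?_ (hσ h hh)
    have hh2 : Measurable fun p : X × X => h p.2 := hh.comp measurable_snd
    have hdiag : Measurable fun x : X => (x, x) := by fun_prop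
    gcongr
    · rw [walk, lintegral_map hh2 hdiag]
    · have : Measurable fun x => ∫⁻ y, g y * h y ∂(κ x) := (hg.mul hh).lintegral_kernel
      refine le_trans (le_of_eq ?_) (ih this)
      refine Finset.sum_congr rfl fun k _ => ?_
      rw [lintegral_walk_succ hg k hh2]

/-- The joint law of starting and stopping points of the particles stopped at jump `n + 1`. -/
noncomputable def stopped (α : Measure X) (κ : Kernel X X) (g : X → ℝ≥0∞) (n : ℕ) :
    Measure (X × X) :=
  ((walk α κ g n).bind (walkKernel κ)).withDensity (fun p => 1 - g p.2)

lemma lintegral_stopped (hg : Measurable g) (n : ℕ) {F : X × X → ℝ≥0∞} (hF : Measurable F) :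
    ∫⁻ q, F q ∂(stopped α κ g n)
      = ∫⁻ p, ∫⁻ y, (1 - g y) * F (p.1, y) ∂(κ p.2) ∂(walk α κ g n) := by
  have hb : Measurable fun p : X × X => 1 - g p.2 :=
    measurable_const.sub (hg.comp measurable_snd)
  rw [stopped, lintegral_withDensity_eq_lintegral_mul _ hb hF,
    lintegral_bind_walkKernel _ (hb.mul hF)]
  rfl

/-- Every jump either stops a particle or keeps it alive. -/
lemma lintegral_stopped_add_walk_succ (hg : Measurable g) (hg1 : ∀ y, g y ≤ 1) (n : ℕ)
    {F : X × X → ℝ≥0∞} (hF : Measurable F) :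
    ∫⁻ q, F q ∂(stopped α κ g n) + ∫⁻ q, F q ∂(walk α κ g (n + 1))
      = ∫⁻ p, ∫⁻ y, F (p.1, y) ∂(κ p.2) ∂(walk α κ g n) := by
  have hg2 : Measurable fun p : X × X => g p.2 := hg.comp measurable_snd
  have key : ∫⁻ q, F q ∂(stopped α κ g n) + ∫⁻ q, F q ∂(walk α κ g (n + 1))
      = ∫⁻ q, F q ∂((walk α κ g n).bind (walkKernel κ)) := by
    have hb : Measurable fun p : X × X => 1 - g p.2 := measurable_const.sub hg2
    rw [stopped, walk, lintegral_withDensity_eq_lintegral_mul _ hb hF,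
      lintegral_withDensity_eq_lintegral_mul _ hg2 hF,
      ← lintegral_add_right _ (hg2.mul hF)]
    refine lintegral_congr fun q => ?_
    simp only [Pi.mul_apply]
    rw [← add_mul, tsub_add_cancel_of_le (hg1 _), one_mul]
  rw [key, lintegral_bind_walkKernel _ hF]

/-- Conservation of mass: a functional of the starting point alone is shared between the stopped
and the surviving particles. -/
lemma sum_stopped_fst (hg : Measurable g) (hg1 : ∀ y, g y ≤ 1) (n : ℕ)
    {h : X → ℝ≥0∞} (hh : Measurable h) :
    ∑ k ∈ Finset.range n, ∫⁻ q, h q.1 ∂(stopped α κ g k) + ∫⁻ q, h q.1 ∂(walk α κ g n)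
      = ∫⁻ x, h x ∂α := by
  have hh1 : Measurable fun p : X × X => h p.1 := hh.comp measurable_fst
  have hdiag : Measurable fun x : X => (x, x) := by fun_prop
  induction n with
  | zero =>
    simp only [Finset.range_zero, Finset.sum_empty, zero_add, walk]
    rw [lintegral_map hh1 hdiag]
  | succ n ih =>
    rw [Finset.sum_range_succ, add_assoc,
      lintegral_stopped_add_walk_succ hg hg1 n hh1, ← ih]
    simp

end Walk

/-! ### Cancelling a common part of both marginals -/

section Cancel

variable {X : Type*} [MetricSpace X] [SecondCountableTopology X] [MeasurableSpace X] [BorelSpace X]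

/-- By the triangle inequality for the distance, the total stopping cost is at most the total cost
of all jumps. -/
lemma sum_stopped_edist_le {α : Measure X} {κ : Kernel X X} [IsMarkovKernel κ] {g : X → ℝ≥0∞}
    (hg : Measurable g) (hg1 : ∀ y, g y ≤ 1) (n : ℕ) :
    ∑ k ∈ Finset.range n, ∫⁻ q, edist q.1 q.2 ∂(stopped α κ g k)
        + ∫⁻ q, edist q.1 q.2 ∂(walk α κ g n)
      ≤ ∑ k ∈ Finset.range n, ∫⁻ p, ∫⁻ y, edist p.2 y ∂(κ p.2) ∂(walk α κ g k) := by
  have hd : Measurable fun q : X × X => edist q.1 q.2 := measurable_edist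
  induction n with
  | zero =>
    simp only [Finset.range_zero, Finset.sum_empty, zero_add, walk]
    rw [lintegral_map hd (by fun_prop)]
    simp
  | succ n ih =>
    rw [Finset.sum_range_succ, add_assoc, lintegral_stopped_add_walk_succ hg hg1 n hd,
      Finset.sum_range_succ]
    refine le_trans ?_ (add_le_add_left ih _)
    rw [add_assoc]
    gcongr
    rw [← lintegral_add_left hd]
    refine lintegral_mono fun p => ?_
    calc ∫⁻ y, edist p.1 y ∂(κ p.2)
        ≤ ∫⁻ y, (edist p.1 p.2 + edist p.2 y) ∂(κ p.2) :=
          lintegral_mono fun y => edist_triangle _ _ _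
      _ = edist p.1 p.2 + ∫⁻ y, edist p.2 y ∂(κ p.2) := by
          rw [lintegral_add_left measurable_const]; simp

variable [CompleteSpace X]

/-- Cancellation lemma: a common part `γ` of the two marginals can be removed without increasing
the transport cost. -/
lemma exists_coupling_of_add [Nonempty X] (α β γ : Measure X) [IsFiniteMeasure α]
    [IsFiniteMeasure β] [IsFiniteMeasure γ] (hmass : α Set.univ = β Set.univ)
    (π : Measure (X × X)) (h1 : π.map Prod.fst = α + γ) (h2 : π.map Prod.snd = β + γ) :
    ∃ ρ : Measure (X × X), ρ.map Prod.fst = α ∧ ρ.map Prod.snd = β ∧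
      ∫⁻ p, edist p.1 p.2 ∂ρ ≤ ∫⁻ p, edist p.1 p.2 ∂π := by
  have hπ : IsFiniteMeasure π := by
    have : IsFiniteMeasure (π.map Prod.fst) := by rw [h1]; infer_instance
    exact Measure.isFiniteMeasure_of_map measurable_fst.aemeasurable
  have : PolishSpace X := inferInstance
  set κ : Kernel X X := π.condKernel with hκ
  have hdis : ∀ F : X × X → ℝ≥0∞, Measurable F →
      ∫⁻ x, ∫⁻ y, F (x, y) ∂(κ x) ∂(α + γ) = ∫⁻ p, F p ∂π := by
    intro F hF
    rw [← h1]
    exact Measure.lintegral_condKernel hF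
  have hsnd : ∀ h : X → ℝ≥0∞, Measurable h →
      ∫⁻ x, ∫⁻ y, h y ∂(κ x) ∂(α + γ) = ∫⁻ y, h y ∂(β + γ) := by
    intro h hh
    rw [hdis (fun p => h p.2) (hh.comp measurable_snd), ← h2,
      lintegral_map hh measurable_snd]
  -- a version of the density of `γ` with respect to `β + γ` that is bounded by one everywhere
  obtain ⟨g, hg, hg1, hgγ⟩ : ∃ g : X → ℝ≥0∞, Measurable g ∧ (∀ y, g y ≤ 1) ∧
      (β + γ).withDensity g = γ := by
    have hle : γ ≤ β + γ := Measure.le_add_left le_rfl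
    refine ⟨fun y => min (γ.rnDeriv (β + γ) y) 1,
      (Measure.measurable_rnDeriv _ _).min measurable_const, fun y => min_le_right _ _, ?_⟩
    have : (fun y => min (γ.rnDeriv (β + γ) y) 1) =ᵐ[β + γ] γ.rnDeriv (β + γ) := by
      filter_upwards [Measure.rnDeriv_le_one_of_le hle] with y hy
      exact min_eq_left hy
    rw [withDensity_congr_ae this, Measure.withDensity_rnDeriv_eq _ _ hle.absolutelyContinuous]
  have hb : Measurable fun y => 1 - g y := measurable_const.sub hg
  have hgint : ∀ h : X → ℝ≥0∞, Measurable h →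
      ∫⁻ y, g y * h y ∂(β + γ) = ∫⁻ y, h y ∂γ := by
    intro h hh
    conv_rhs => rw [← hgγ]
    rw [lintegral_withDensity_eq_lintegral_mul _ hg hh]
    rfl
  have hbβ : (β + γ).withDensity (fun y => 1 - g y) = β := by
    have hadd : (β + γ).withDensity (fun y => 1 - g y) + γ = β + γ := by
      nth_rewrite 2 [← hgγ]
      rw [← withDensity_add_right _ hg]
      have : (fun y => 1 - g y) + g = 1 := by
        funext y; exact tsub_add_cancel_of_le (hg1 y)
      rw [this, withDensity_one]
    ext s hs
    have := congrArg (fun m : Measure X => m s) hadd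
    simp only [Measure.add_apply] at this
    exact (ENNReal.add_left_inj (measure_ne_top γ s)).1 this
  have hbint : ∀ h : X → ℝ≥0∞, Measurable h →
      ∫⁻ y, (1 - g y) * h y ∂(β + γ) = ∫⁻ y, h y ∂β := by
    intro h hh
    conv_rhs => rw [← hbβ]
    rw [lintegral_withDensity_eq_lintegral_mul _ hb hh]
    rfl
  have hocc : ∀ n {h : X → ℝ≥0∞}, Measurable h →
      ∑ k ∈ Finset.range n, ∫⁻ p, h p.2 ∂(walk α κ g k) ≤ ∫⁻ x, h x ∂(α + γ) := by
    intro n h hh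
    refine sum_lintegral_walk_le hg (fun h hh => ?_) n hh
    rw [hsnd (fun y => g y * h y) (hg.mul hh), hgint h hh, lintegral_add_measure]
  have hsurv : Tendsto (fun n => walk α κ g n Set.univ) atTop (𝓝 0) := by
    refine ENNReal.tendsto_atTop_zero_of_tsum_ne_top ?_
    refine ne_top_of_le_ne_top (measure_ne_top (α + γ) Set.univ) ?_
    refine ENNReal.tsum_le_of_sum_range_le fun n => ?_
    simpa using hocc n (h := fun _ => 1) measurable_const
  set ρ : Measure (X × X) := Measure.sum (stopped α κ g) with hρ
  have hfst : ρ.map Prod.fst = α := by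
    ext s hs
    have hms : Measurable (s.indicator (1 : X → ℝ≥0∞)) := measurable_one.indicator hs
    have e : ∀ m : Measure (X × X), m (Prod.fst ⁻¹' s)
        = ∫⁻ q, s.indicator (1 : X → ℝ≥0∞) q.1 ∂m := by
      intro m
      rw [← lintegral_indicator_one (measurable_fst hs)]
      rfl
    have hsum : Tendsto (fun n => ∑ k ∈ Finset.range n, stopped α κ g k (Prod.fst ⁻¹' s)
        + walk α κ g n (Prod.fst ⁻¹' s)) atTop (𝓝 (ρ (Prod.fst ⁻¹' s) + 0)) := by
      refine Tendsto.add ?_ ?_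
      · rw [hρ, Measure.sum_apply _ (measurable_fst hs)]
        exact ENNReal.tendsto_nat_tsum _
      · exact tendsto_of_tendsto_of_tendsto_of_le_of_le tendsto_const_nhds hsurv
          (fun _ => zero_le) (fun _ => measure_mono (Set.subset_univ _))
    have hconst : (fun n => ∑ k ∈ Finset.range n, stopped α κ g k (Prod.fst ⁻¹' s)
        + walk α κ g n (Prod.fst ⁻¹' s)) = fun _ => α s := by
      funext n
      simp only [e]
      rw [sum_stopped_fst hg hg1 n hms, lintegral_indicator_one hs]
    rw [hconst, add_zero] at hsum
    rw [Measure.map_apply measurable_fst hs]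
    exact tendsto_nhds_unique hsum tendsto_const_nhds
  have hsndle : ρ.map Prod.snd ≤ β := by
    refine Measure.le_iff.2 fun s hs => ?_
    have hms : Measurable (s.indicator (1 : X → ℝ≥0∞)) := measurable_one.indicator hs
    rw [Measure.map_apply measurable_snd hs, hρ, Measure.sum_apply _ (measurable_snd hs)]
    refine ENNReal.tsum_le_of_sum_range_le fun n => ?_
    calc ∑ k ∈ Finset.range n, stopped α κ g k (Prod.snd ⁻¹' s)
        = ∑ k ∈ Finset.range n, ∫⁻ p, ∫⁻ y, (1 - g y) * s.indicator (1 : X → ℝ≥0∞) y ∂(κ p.2)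
            ∂(walk α κ g k) := by
          refine Finset.sum_congr rfl fun k _ => ?_
          rw [← lintegral_indicator_one (measurable_snd hs)]
          exact lintegral_stopped hg k (hms.comp measurable_snd)
      _ ≤ ∫⁻ x, ∫⁻ y, (1 - g y) * s.indicator (1 : X → ℝ≥0∞) y ∂(κ x) ∂(α + γ) :=
          hocc n (hb.mul hms).lintegral_kernel
      _ = β s := by
          rw [hsnd (fun y => (1 - g y) * s.indicator 1 y) (hb.mul hms), hbint _ hms, lintegral_indicator_one hs]
  refine ⟨ρ, hfst, ?_, ?_⟩
  · have : IsFiniteMeasure (ρ.map Prod.snd) := isFiniteMeasure_of_le β hsndle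
    refine Measure.eq_of_le_of_measure_univ_eq hsndle ?_
    rw [← hmass, ← hfst, Measure.map_apply measurable_snd .univ,
      Measure.map_apply measurable_fst .univ]
    rfl
  · have hd : Measurable fun q : X × X => edist q.1 q.2 := measurable_edist
    rw [hρ, lintegral_sum_measure]
    refine ENNReal.tsum_le_of_sum_range_le fun n => ?_
    calc ∑ k ∈ Finset.range n, ∫⁻ q, edist q.1 q.2 ∂(stopped α κ g k)
        ≤ ∑ k ∈ Finset.range n, ∫⁻ p, ∫⁻ y, edist p.2 y ∂(κ p.2) ∂(walk α κ g k) :=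
          le_self_add.trans (sum_stopped_edist_le hg hg1 n)
      _ ≤ ∫⁻ x, ∫⁻ y, edist x y ∂(κ x) ∂(α + γ) :=
          hocc n (h := fun x => ∫⁻ y, edist x y ∂(κ x)) hd.lintegral_kernel_prod_right'
      _ = ∫⁻ p, edist p.1 p.2 ∂π := hdis _ hd

end Cancel

/-! ### Couplings and their costs -/

section Coupling

variable {X : Type*} [MetricSpace X] [MeasurableSpace X]

/-- The set of transport costs over which `W1 α β` is the infimum. -/
def costs (α β : Measure X) : Set ℝ :=
  {c : ℝ | ∃ π : Measure (X × X),
    π.map Prod.fst = α ∧ π.map Prod.snd = β ∧ c = ∫ p, dist p.1 p.2 ∂π}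

lemma costs_nonneg {α β : Measure X} {c : ℝ} (hc : c ∈ costs α β) : 0 ≤ c := by
  obtain ⟨π, -, -, rfl⟩ := hc
  exact integral_nonneg fun p => dist_nonneg

lemma costs_bddBelow (α β : Measure X) : BddBelow (costs α β) :=
  ⟨0, fun _ => costs_nonneg⟩

lemma costs_nonempty {α β : Measure X} [IsFiniteMeasure α] [IsFiniteMeasure β]
    (hmass : α Set.univ = β Set.univ) : (costs α β).Nonempty := by
  by_cases h0 : α Set.univ = 0
  · have hα : α = 0 := Measure.measure_univ_eq_zero.1 h0
    have hβ : β = 0 := Measure.measure_univ_eq_zero.1 (hmass ▸ h0)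
    exact ⟨_, 0, by simp [hα], by simp [hβ], rfl⟩
  · refine ⟨_, (α Set.univ)⁻¹ • α.prod β, ?_, ?_, rfl⟩
    · rw [Measure.map_smul, Measure.map_fst_prod, smul_smul, ← hmass,
        ENNReal.inv_mul_cancel h0 (measure_ne_top _ _), one_smul]
    · rw [Measure.map_smul, Measure.map_snd_prod, smul_smul,
        ENNReal.inv_mul_cancel h0 (measure_ne_top _ _), one_smul]

lemma ofReal_integral_dist {π : Measure (X × X)}
    (hπ : Integrable (fun p : X × X => dist p.1 p.2) π) :
    ENNReal.ofReal (∫ p, dist p.1 p.2 ∂π) = ∫⁻ p, edist p.1 p.2 ∂π := by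
  rw [ofReal_integral_eq_lintegral_ofReal hπ (.of_forall fun p => dist_nonneg)]
  simp only [edist_dist]

variable [SecondCountableTopology X] [BorelSpace X]

lemma costs_subset_swap (α β : Measure X) : costs α β ⊆ costs β α := by
  rintro c ⟨π, h1, h2, rfl⟩
  refine ⟨π.map Prod.swap, ?_, ?_, ?_⟩
  · rw [Measure.map_map measurable_fst measurable_swap]; exact h2
  · rw [Measure.map_map measurable_snd measurable_swap]; exact h1
  · rw [integral_map measurable_swap.aemeasurable
      (measurable_dist (α := X)).aestronglyMeasurable]
    exact integral_congr_ae (.of_forall fun p => dist_comm _ _)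

lemma W1_comm (α β : Measure X) : W1 α β = W1 β α :=
  congrArg sInf ((costs_subset_swap α β).antisymm (costs_subset_swap β α))

lemma W1_self (α : Measure X) : W1 α α = 0 := by
  refine le_antisymm (csInf_le (costs_bddBelow α α) ?_) (Real.sInf_nonneg fun _ => costs_nonneg)
  have hm : Measurable fun x : X => (x, x) := by fun_prop
  refine ⟨α.map (fun x => (x, x)), ?_, ?_, ?_⟩
  · rw [Measure.map_map measurable_fst hm]; exact Measure.map_id
  · rw [Measure.map_map measurable_snd hm]; exact Measure.map_id
  · rw [integral_map hm.aemeasurable (measurable_dist (α := X)).aestronglyMeasurable]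
    simp

lemma integrable_dist_coupling {α β : Measure X} {x0 : X}
    (hα : Integrable (fun x => dist x x0) α) (hβ : Integrable (fun x => dist x x0) β)
    {π : Measure (X × X)} (h1 : π.map Prod.fst = α) (h2 : π.map Prod.snd = β) :
    Integrable (fun p : X × X => dist p.1 p.2) π := by
  subst h1 h2
  have i1 : Integrable (fun p : X × X => dist p.1 x0) π := hα.comp_measurable measurable_fst
  have i2 : Integrable (fun p : X × X => dist p.2 x0) π := hβ.comp_measurable measurable_snd
  refine (i1.add i2).mono' (measurable_dist (α := X)).aestronglyMeasurable
    (.of_forall fun p => ?_)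
  rw [Real.norm_of_nonneg dist_nonneg]
  exact dist_triangle_right _ _ _

/-- A coupling of small cost moves little mass far, by Markov's inequality. -/
lemma measure_le_of_W1_eq_zero {α β : Measure X} [IsFiniteMeasure α] [IsFiniteMeasure β] {x0 : X}
    (hα : Integrable (fun x => dist x x0) α) (hβ : Integrable (fun x => dist x x0) β)
    (hmass : α Set.univ = β Set.univ) (h : W1 α β = 0) {F : Set X} (hF : IsClosed F) :
    α F ≤ β F := by
  have hthick : ∀ ε : ℝ, 0 < ε → α F ≤ β (Metric.cthickening ε F) := by
    intro ε hε
    refine ENNReal.le_of_forall_pos_le_add fun δ hδ _ => ?_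
    have hlt : sInf (costs α β) < ε * δ := by
      have : sInf (costs α β) = 0 := h
      rw [this]; positivity
    obtain ⟨c, ⟨π, h1, h2, rfl⟩, hc⟩ := exists_lt_of_csInf_lt (costs_nonempty hmass) hlt
    have hint := integrable_dist_coupling hα hβ h1 h2
    have hfar : π {p | ENNReal.ofReal ε ≤ edist p.1 p.2} ≤ δ := by
      refine (meas_ge_le_lintegral_div measurable_edist.aemeasurable
        (by simpa using hε) ENNReal.ofReal_ne_top).trans ?_
      rw [← ofReal_integral_dist hint]
      refine ENNReal.div_le_of_le_mul' ?_
      rw [← ENNReal.ofReal_coe_nnreal, ← ENNReal.ofReal_mul hε.le]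
      exact ENNReal.ofReal_le_ofReal hc.le
    have hcov : Prod.fst ⁻¹' F ⊆ Prod.snd ⁻¹' (Metric.cthickening ε F) ∪
        {p : X × X | ENNReal.ofReal ε ≤ edist p.1 p.2} := by
      intro p hp
      by_cases hd : ENNReal.ofReal ε ≤ edist p.1 p.2
      · exact Or.inr hd
      · left
        refine Metric.mem_cthickening_of_edist_le p.2 p.1 ε F hp ?_
        rw [edist_comm]; exact (not_le.1 hd).le
    rw [← h1, ← h2, Measure.map_apply measurable_fst hF.measurableSet,
      Measure.map_apply measurable_snd Metric.isClosed_cthickening.measurableSet]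
    exact (measure_mono hcov).trans ((measure_union_le _ _).trans (by gcongr))
  have ht := tendsto_measure_cthickening_of_isClosed (μ := β)
    ⟨1, one_pos, measure_ne_top _ _⟩ hF
  refine ge_of_tendsto (ht.mono_left (nhdsWithin_le_nhds (s := Set.Ioi (0 : ℝ)))) ?_
  filter_upwards [self_mem_nhdsWithin] with ε hε using hthick ε hε

lemma eq_of_W1_eq_zero {α β : Measure X} [IsFiniteMeasure α] [IsFiniteMeasure β] {x0 : X}
    (hα : Integrable (fun x => dist x x0) α) (hβ : Integrable (fun x => dist x x0) β)
    (hmass : α Set.univ = β Set.univ) (h : W1 α β = 0) : α = β := by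
  refine ext_of_generate_finite _ ?_ isPiSystem_isClosed (fun F hF => ?_) hmass
  · rw [BorelSpace.measurable_eq (α := X), borel_eq_generateFrom_isClosed]
  · exact (measure_le_of_W1_eq_zero hα hβ hmass h hF).antisymm
      (measure_le_of_W1_eq_zero hβ hα hmass.symm (W1_comm α β ▸ h) hF)

/-- The triangle inequality in the form needed for signed measures: the unprimed and primed
measures play the role of positive and negative parts. Two couplings are added and the common
part `b + b'` of the resulting marginals is cancelled. -/
lemma W1_signed_triangle [CompleteSpace X] {a a' b b' c c' : Measure X}
    [IsFiniteMeasure a] [IsFiniteMeasure a'] [IsFiniteMeasure b] [IsFiniteMeasure b']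
    [IsFiniteMeasure c] [IsFiniteMeasure c'] {x0 : X}
    (ha : Integrable (fun x => dist x x0) (a + a')) (hb : Integrable (fun x => dist x x0) (b + b'))
    (hc : Integrable (fun x => dist x x0) (c + c'))
    (hab : (a + b') Set.univ = (a' + b) Set.univ) (hbc : (b + c') Set.univ = (b' + c) Set.univ)
    (hac : (a + c') Set.univ = (a' + c) Set.univ) :
    W1 (a + c') (a' + c) ≤ W1 (a + b') (a' + b) + W1 (b + c') (b' + c) := by
  have : Nonempty X := ⟨x0⟩
  rw [integrable_add_measure] at ha hb hc
  have key : ∀ r ∈ costs (a + b') (a' + b), ∀ s ∈ costs (b + c') (b' + c),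
      W1 (a + c') (a' + c) ≤ r + s := by
    rintro r ⟨π₁, h11, h12, rfl⟩ s ⟨π₂, h21, h22, rfl⟩
    have i1 := integrable_dist_coupling (ha.1.add_measure hb.2) (ha.2.add_measure hb.1) h11 h12
    have i2 := integrable_dist_coupling (hb.1.add_measure hc.2) (hb.2.add_measure hc.1) h21 h22
    obtain ⟨ρ, hρ1, hρ2, hρ⟩ := exists_coupling_of_add (a + c') (a' + c) (b + b') hac (π₁ + π₂)
      (by rw [Measure.map_add _ _ measurable_fst, h11, h21]; abel)
      (by rw [Measure.map_add _ _ measurable_snd, h12, h22]; abel)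
    have iρ := integrable_dist_coupling (ha.1.add_measure hc.2) (ha.2.add_measure hc.1) hρ1 hρ2
    have hle : ∫ p, dist p.1 p.2 ∂ρ ≤ ∫ p, dist p.1 p.2 ∂π₁ + ∫ p, dist p.1 p.2 ∂π₂ := by
      rw [lintegral_add_measure, ← ofReal_integral_dist iρ, ← ofReal_integral_dist i1,
        ← ofReal_integral_dist i2, ← ENNReal.ofReal_add (integral_nonneg fun p => dist_nonneg)
          (integral_nonneg fun p => dist_nonneg)] at hρ
      exact (ENNReal.ofReal_le_ofReal_iff (add_nonneg (integral_nonneg fun p => dist_nonneg)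
        (integral_nonneg fun p => dist_nonneg))).1 hρ
    exact (csInf_le (costs_bddBelow _ _) ⟨ρ, hρ1, hρ2, rfl⟩).trans hle
  have h1 : ∀ r ∈ costs (a + b') (a' + b),
      W1 (a + c') (a' + c) - r ≤ W1 (b + c') (b' + c) := fun r hr =>
    le_csInf (costs_nonempty hbc) fun s hs => by linarith [key r hr s hs]
  have h2 : W1 (a + c') (a' + c) - W1 (b + c') (b' + c) ≤ W1 (a + b') (a' + b) :=
    le_csInf (costs_nonempty hab) fun r hr => by linarith [h1 r hr]
  linarith

end Coupling

/-! ### Signed measures -/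

section Signed

variable {X : Type*} [MeasurableSpace X]

lemma signed_apply_eq (μ : SignedMeasure X) {s : Set X} (hs : MeasurableSet s) :
    μ s = (μ.toJordanDecomposition.posPart s).toReal
      - (μ.toJordanDecomposition.negPart s).toReal := by
  conv_lhs => rw [← μ.toSignedMeasure_toJordanDecomposition]
  simp [JordanDecomposition.toSignedMeasure, Measure.toSignedMeasure_apply_measurable hs,
    Measure.real]

/-- Two signed measures agree on a set exactly when the positive measures compared by `WW1` do. -/
lemma cross_apply_eq_iff (μ ν : SignedMeasure X) {s : Set X} (hs : MeasurableSet s) :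
    (μ.toJordanDecomposition.posPart + ν.toJordanDecomposition.negPart) s
      = (μ.toJordanDecomposition.negPart + ν.toJordanDecomposition.posPart) s ↔ μ s = ν s := by
  rw [signed_apply_eq μ hs, signed_apply_eq ν hs, Measure.add_apply, Measure.add_apply,
    ← ENNReal.toReal_eq_toReal_iff' (by finiteness) (by finiteness),
    ENNReal.toReal_add (by finiteness) (by finiteness),
    ENNReal.toReal_add (by finiteness) (by finiteness)]
  constructor <;> intro h <;> linarith

end Signed

/-- `𝕎₁` is a metric on finite signed measures on a Polish space with total
mass 1 and finite first moment: nonnegative, symmetric, vanishing exactly on the diagonal,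
and satisfying the triangle inequality. -/
theorem WW1_is_metric
    {X : Type*} [MetricSpace X] [CompleteSpace X] [TopologicalSpace.SeparableSpace X]
    [MeasurableSpace X] [BorelSpace X]
    (μ ν θ : SignedMeasure X)
    (hμmass : μ Set.univ = 1) (hνmass : ν Set.univ = 1) (hθmass : θ Set.univ = 1)
    (hmomμ : ∀ x0 : X, Integrable (fun x => dist x x0) μ.totalVariation)
    (hmomν : ∀ x0 : X, Integrable (fun x => dist x x0) ν.totalVariation)
    (hmomθ : ∀ x0 : X, Integrable (fun x => dist x x0) θ.totalVariation) :
    0 ≤ WW1 μ ν ∧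
    WW1 μ ν = WW1 ν μ ∧
    (WW1 μ ν = 0 ↔ μ = ν) ∧
    WW1 μ θ ≤ WW1 μ ν + WW1 ν θ := by
  have : SecondCountableTopology X := UniformSpace.secondCountable_of_separable X
  obtain ⟨x0⟩ : Nonempty X := by
    by_contra hX
    rw [not_nonempty_iff] at hX
    rw [Set.univ_eq_empty_iff.2 hX, VectorMeasure.empty] at hμmass
    exact zero_ne_one hμmass
  have hmass : ∀ σ τ : SignedMeasure X, σ Set.univ = 1 → τ Set.univ = 1 →
      (σ.toJordanDecomposition.posPart + τ.toJordanDecomposition.negPart) Set.univ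
        = (σ.toJordanDecomposition.negPart + τ.toJordanDecomposition.posPart) Set.univ :=
    fun σ τ hσ hτ => (cross_apply_eq_iff σ τ .univ).2 (hσ.trans hτ.symm)
  refine ⟨Real.sInf_nonneg fun _ => costs_nonneg, ?_, ⟨fun h => ?_, ?_⟩, ?_⟩
  · rw [WW1, WW1, W1_comm, add_comm, add_comm μ.toJordanDecomposition.posPart]
  · have iμ := integrable_add_measure.1 (hmomμ x0)
    have iν := integrable_add_measure.1 (hmomν x0)
    have heq := eq_of_W1_eq_zero (iμ.1.add_measure iν.2) (iμ.2.add_measure iν.1)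
      (hmass μ ν hμmass hνmass) h
    ext s hs
    rw [← cross_apply_eq_iff μ ν hs, heq]
  · rintro rfl
    rw [WW1, add_comm, W1_self]
  · exact W1_signed_triangle (hmomμ x0) (hmomν x0) (hmomθ x0) (hmass μ ν hμmass hνmass)
      (hmass ν θ hνmass hθmass) (hmass μ θ hμmass hθmass)
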